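/- Let $V$ be a finite vertex algebra, $S$ a Lie conformal subalgebra of $V$, and $\psi$ a non-zero weight for the adjoint action of $S$ on $V$. Then the generalized weight space $V^\psi$ is an ideal of the vertex algebra $V$ satisfying $V^\psi \cdot V^\psi = 0$ (an abelian vertex ideal). -/

import Mathlib

open scoped BigOperators

/-- A vertex algebra structure on a complex vector space `V`.
`P n a b` denotes the `n`-th product `a_{(n)} b`, `vac` is the vacuum `𝟙`,
and `D` is the infinitesimal translation operator `T`. -/
structure VertexAlgebra (V : Type*) [AddCommGroup V] [Module ℂ V] where
  P : ℤ → V →ₗ[ℂ] V →ₗ[ℂ] V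
  vac : V
  D : V →ₗ[ℂ] V
  field_ax : ∀ a b : V, ∃ N : ℕ, ∀ n : ℕ, N ≤ n → P n a b = 0
  vac_field : ∀ (n : ℤ) (a : V), P n vac a = if n = -1 then a else 0
  creation : ∀ a : V, P (-1) a vac = a
  creation_pos : ∀ (a : V) (n : ℤ), 0 ≤ n → P n a vac = 0
  D_vac : D vac = 0
  transl_inv : ∀ (n : ℤ) (a b : V), P n (D a) b = (-n : ℂ) • P (n - 1) a b
  D_deriv : ∀ (n : ℤ) (a b : V), D (P n a b) = P n (D a) b + P n a (D b)
  skew : ∀ (n : ℤ) (a b : V),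
    P n a b = ∑ᶠ j : ℕ, (((-1 : ℂ) ^ (n + j + 1)) / (j.factorial : ℂ)) • (D ^ j) (P (n + j) b a)
  borcherds : ∀ (m k : ℤ) (a b c : V),
    P m a (P k b c) - P k b (P m a c)
      = ∑ᶠ j : ℕ, ((Ring.choose m j : ℤ) : ℂ) • P (m + k - j) (P j a b) c

namespace VertexAlgebra

variable {V : Type*} [AddCommGroup V] [Module ℂ V] (W : VertexAlgebra V)

/-- An ideal of a vertex algebra: a `ℂ[T]`-submodule closed under all products with
arbitrary elements of `V`. -/
def IsIdeal (I : Submodule ℂ V) : Prop :=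
  (∀ x ∈ I, W.D x ∈ I) ∧ ∀ (a : V), ∀ b ∈ I, ∀ n : ℤ, W.P n a b ∈ I

/-- `A · B`: the span of all products `a_{(j)} b`, `a ∈ A`, `b ∈ B`, `j ∈ ℤ`. -/
def prodSpan (A B : Submodule ℂ V) : Submodule ℂ V :=
  Submodule.span ℂ {x | ∃ a ∈ A, ∃ b ∈ B, ∃ j : ℤ, x = W.P j a b}

/-- `[A, B]`: the span of all products `a_{(j)} b`, `a ∈ A`, `b ∈ B`, `j ≥ 0`. -/
def posSpan (A B : Submodule ℂ V) : Submodule ℂ V :=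
  Submodule.span ℂ {x | ∃ a ∈ A, ∃ b ∈ B, ∃ j : ℕ, x = W.P j a b}

/-- The sequence `I^1 = I`, `I^{n+1} = I^n · I^n` (indexed so that `nilSeq I n = I^{n+1}`). -/
def nilSeq (I : Submodule ℂ V) : ℕ → Submodule ℂ V
  | 0 => I
  | n + 1 => W.prodSpan (nilSeq I n) (nilSeq I n)

/-- A nil-ideal: an ideal whose sequence of iterated self-products vanishes. -/
def IsNilIdeal (I : Submodule ℂ V) : Prop :=
  W.IsIdeal I ∧ ∃ n : ℕ, W.nilSeq I n = ⊥

/-- A vertex algebra is finite if it is a finitely generated `ℂ[T]`-module. -/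
def IsFinite : Prop :=
  ∃ s : Finset V, ∀ v : V,
    v ∈ Submodule.span ℂ {x | ∃ g ∈ s, ∃ k : ℕ, x = (W.D ^ k) g}

/-- Abelian ideal. -/
def IsAbelianIdeal (I : Submodule ℂ V) : Prop :=
  W.IsIdeal I ∧ ∀ a ∈ I, ∀ b ∈ I, ∀ n : ℤ, W.P n a b = 0

end VertexAlgebra

namespace VertexAlgebra

variable {V : Type*} [AddCommGroup V] [Module ℂ V]

/-- A Lie conformal subalgebra of (the Lie conformal algebra underlying) a vertex algebra:
a `ℂ[T]`-submodule closed under all non-negative products. -/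
def IsConfSubalgebra (W : VertexAlgebra V) (S : Submodule ℂ V) : Prop :=
  (∀ x ∈ S, W.D x ∈ S) ∧ ∀ a ∈ S, ∀ b ∈ S, ∀ n : ℕ, W.P n a b ∈ S

/-- `ψ` (given by its coefficients `ψ s h` of `λ^h/h!`) is a weight for the adjoint action
of `S` on `V`: there is a non-zero weight vector. -/
def IsWeight (W : VertexAlgebra V) (S : Submodule ℂ V) (ψ : V → ℕ → ℂ) : Prop :=
  ∃ v : V, v ≠ 0 ∧ ∀ s ∈ S, ∀ h : ℕ, W.P h s v = ψ s h • v

/-- The ascending chain `V^ψ_0 = 0`, `V^ψ_{i+1} = {v | s_λ v - ψ_s(λ) v ∈ V^ψ_i[λ]}`. -/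
def genWtSeq (W : VertexAlgebra V) (S : Submodule ℂ V) (ψ : V → ℕ → ℂ) : ℕ → Set V
  | 0 => {0}
  | i + 1 => {v | ∀ s ∈ S, ∀ h : ℕ, W.P h s v - ψ s h • v ∈ genWtSeq W S ψ i}

/-- The generalized weight space `V^ψ = ⋃ᵢ V^ψ_i`. -/
def genWt (W : VertexAlgebra V) (S : Submodule ℂ V) (ψ : V → ℕ → ℂ) : Set V :=
  {v | ∃ i : ℕ, v ∈ genWtSeq W S ψ i}

end VertexAlgebra

/-!
In a finite vertex algebra `[V, V] · [V, V] = 0`. Indeed, the products `x_(n) s` with `n ≥ 0` and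
`s` fixed span a finite-dimensional space, because `(T^k g)_(n) s` is a multiple of `g_(n-k) s`.
By skew-symmetry this space contains `∑ⱼ (-T)^j / j! s_(n+j) x`. Taking `x = a_(k-t) v`, `n = d + t`
and forming the alternating binomial sum over `t`, locality replaces `s_(d+t+j) a_(k-t) v` by
`a_(k-t) s_(d+t+j) v`. The term `j = t = 0` is `± a_(k) s_(d) v` and all others involve `s_(m) v`
with `m > d`, so by descending induction on `d` the vectors `a_(k) s_(d) v`, `k ∈ ℤ`, span a
finite-dimensional space. For large `m` the operator `b_(m)` kills that space, so that the
commutator `[b_(m), a_(k)] s_(d) v = ∑ᵢ (m choose i) (b_(i) a)_(m+k-i) s_(d) v` vanishes; being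
polynomial in `m` for fixed `m + k`, it has zero coefficients `(b_(i) a)_(k) (s_(d) v)`.

A generalized weight space of a non-zero weight lies in `[V, V]`, since `ψ_s(λ) v` is `s_λ v` up to
the previous layer. Hence its products vanish, and on it every `a_(k)` commutes with the action of
`S`, so that it is stable under all `a_(k)`.
-/

section BinomialSums

open Finset
open scoped fwdDiff

variable {R G : Type*} [Ring R] [BinomialRing R] [AddCommGroup G]

theorem fwdDiff_ringChoose_succ_smul [Module R G] (i : ℕ) (g : G) :
    Δ_[(1 : R)] (fun x : R ↦ Ring.choose x (i + 1) • g) = fun x ↦ Ring.choose x i • g := by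
  ext x
  simp only [fwdDiff, Ring.choose_succ_succ, add_smul, add_sub_cancel_right]

theorem fwdDiff_iter_ringChoose_smul_eq_zero [Module R G] {i n : ℕ} (h : i < n) (g : G) :
    (Δ_[(1 : R)])^[n] (fun x : R ↦ Ring.choose x i • g) = 0 := by
  induction n generalizing i with
  | zero => exact absurd h i.not_lt_zero
  | succ n ih =>
    rw [Function.iterate_succ_apply]
    cases i with
    | zero =>
      simp only [Ring.choose_zero_right, fwdDiff_const]
      exact Function.iterate_fixed (fwdDiff_const (1 : R) (0 : G)) n
    | succ i => rw [fwdDiff_ringChoose_succ_smul, ih (Nat.lt_of_succ_lt_succ h)]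

theorem fwdDiff_iter_sum_ringChoose_smul_eq_zero [Module R G] (n : ℕ) (y : ℕ → G) :
    (Δ_[(1 : R)])^[n] (fun x : R ↦ ∑ i ∈ range n, Ring.choose x i • y i) = 0 := by
  rw [← Finset.sum_fn, fwdDiff_iter_finsetSum]
  exact sum_eq_zero fun i hi ↦ fwdDiff_iter_ringChoose_smul_eq_zero (mem_range.1 hi) (y i)

theorem eq_zero_of_sum_ringChoose_smul_eq_zero {n : ℕ} {N : ℤ} {y : ℕ → G}
    (h : ∀ m : ℤ, N ≤ m → ∑ i ∈ range n, Ring.choose m i • y i = 0) {i : ℕ} (hi : i < n) :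
    y i = 0 := by
  induction n generalizing y i with
  | zero => exact absurd hi i.not_lt_zero
  | succ n ih =>
    have shifted_eq_zero : ∀ i < n, y (i + 1) = 0 := fun i hi ↦ by
      refine ih (y := fun i ↦ y (i + 1)) (fun m hm ↦ ?_) hi
      have hdiff := sub_eq_zero_of_eq ((h (m + 1) (by lia)).trans (h m hm).symm)
      simpa only [sum_range_succ', Ring.choose_succ_succ, Ring.choose_zero_right, add_smul,
        sum_add_distrib, add_sub_add_right_eq_sub, add_sub_cancel_right] using hdiff
    cases i with
    | zero =>
      have hN := h N le_rfl
      rwa [sum_range_succ', sum_eq_zero fun i hi ↦ by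
        rw [shifted_eq_zero i (mem_range.1 hi), smul_zero], zero_add, Ring.choose_zero_right,
        one_smul] at hN
    | succ i => exact shifted_eq_zero i (Nat.lt_of_succ_lt_succ hi)

end BinomialSums

theorem mem_of_finsum_mem {R M ι : Type*} [Ring R] [AddCommGroup M] [Module R M]
    {F : Submodule R M} {f : ι → M} {i : ι} (hf : f.HasFiniteSupport) (hsum : ∑ᶠ j, f j ∈ F)
    (hne : ∀ j ≠ i, f j ∈ F) : f i ∈ F := by
  rw [← F.ker_mkQ, LinearMap.mem_ker] at hsum ⊢
  have mkQ_eq_zero (j : ι) (hj : j ≠ i) : F.mkQ (f j) = 0 :=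
    (Submodule.Quotient.mk_eq_zero F).2 (hne j hj)
  rwa [map_finsum F.mkQ hf, finsum_eq_single _ i mkQ_eq_zero] at hsum

namespace VertexAlgebra

open Finset Submodule

variable {V : Type*} [AddCommGroup V] [Module ℂ V] (W : VertexAlgebra V)

section Locality

theorem P_commutator {s a : V} {I : ℕ} (hI : ∀ i : ℕ, I ≤ i → W.P i s a = 0) (m k : ℤ) (v : V) :
    W.P m s (W.P k a v) - W.P k a (W.P m s v)
      = ∑ i ∈ range I, Ring.choose m i • W.P (m + k - i) (W.P i s a) v := by
  rw [W.borcherds, finsum_eq_sum_of_support_subset (s := range I)]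
  · simp only [Int.cast_smul_eq_zsmul]
  · refine Function.support_subset_iff'.2 fun i hi ↦ ?_
    rw [hI i (by simpa using hi), map_zero, LinearMap.zero_apply, smul_zero]

-- Locality: the coefficients of `(z - w) ^ I [Y(s, z), Y(a, w)] v` vanish.
theorem sum_P_P_comm {s a : V} {I : ℕ} (hI : ∀ i : ℕ, I ≤ i → W.P i s a = 0)
    (m k : ℤ) (v : V) :
    ∑ t ∈ range (I + 1), ((-1) ^ (I - t) * I.choose t : ℤ) • W.P (m + t) s (W.P (k - t) a v)
      = ∑ t ∈ range (I + 1),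
          ((-1) ^ (I - t) * I.choose t : ℤ) • W.P (k - t) a (W.P (m + t) s v) := by
  have hdiff := congrFun (fwdDiff_iter_sum_ringChoose_smul_eq_zero (R := ℤ) I
    fun i ↦ W.P (m + k - i) (W.P i s a) v) m
  rw [fwdDiff_iter_eq_sum_shift, Pi.zero_apply] at hdiff
  rw [← sub_eq_zero, ← sum_sub_distrib, ← hdiff]
  refine sum_congr rfl fun t _ ↦ ?_
  rw [← smul_sub, W.P_commutator hI, nsmul_one]
  congr! 6
  ring

theorem finsum_D_pow_P (n : ℤ) (s x : V) :
    ∑ᶠ j : ℕ, ((-1 : ℂ) ^ j / j.factorial) • (W.D ^ j) (W.P (n + j) s x)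
      = (-1 : ℂ) ^ (n + 1) • W.P n x s := by
  rw [W.skew n x s, smul_finsum]
  refine finsum_congr fun j ↦ ?_
  have hsign : (-1 : ℂ) ^ (n + 1) * (-1) ^ (n + j + 1) = (-1) ^ j := by
    rw [← zpow_add₀ (by simp), show n + 1 + (n + j + 1) = 2 * (n + 1) + j by ring,
      zpow_add₀ (by simp), zpow_mul]
    simp
  rw [smul_smul, ← mul_div_assoc, hsign]

theorem hasFiniteSupport_D_pow_P (n : ℕ) (c : ℕ → ℂ) (s x : V) :
    (fun j : ℕ ↦ c j • (W.D ^ j) (W.P (n + j) s x)).HasFiniteSupport := by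
  obtain ⟨N, hN⟩ := W.field_ax s x
  refine (finite_toSet (range N)).subset (Function.support_subset_iff'.2 fun j hj ↦ ?_)
  rw [← Nat.cast_add, hN (n + j) (by rw [mem_coe, mem_range] at hj; lia), map_zero, smul_zero]

theorem finsum_D_pow_sum_P_P_mem {F : Submodule ℂ V} {s a : V}
    (hF : ∀ (x : V) (n : ℕ), W.P n x s ∈ F) {I : ℕ} (hI : ∀ i : ℕ, I ≤ i → W.P i s a = 0)
    (n : ℕ) (k : ℤ) (v : V) :
    ∑ᶠ j : ℕ, ((-1 : ℂ) ^ j / j.factorial) • (W.D ^ j) (∑ t ∈ range (I + 1),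
      ((-1) ^ (I - t) * I.choose t : ℤ) • W.P (k - t) a (W.P (n + j + t) s v)) ∈ F := by
  have expand (j : ℕ) : ((-1 : ℂ) ^ j / j.factorial) • (W.D ^ j) (∑ t ∈ range (I + 1),
        ((-1) ^ (I - t) * I.choose t : ℤ) • W.P (k - t) a (W.P (n + j + t) s v))
      = ∑ t ∈ range (I + 1), ((-1) ^ (I - t) * I.choose t : ℤ) •
          ((-1 : ℂ) ^ j / j.factorial) •
            (W.D ^ j) (W.P ((n + t : ℕ) + j) s (W.P (k - t) a v)) := by
    rw [← W.sum_P_P_comm hI, map_sum, smul_sum]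
    refine sum_congr rfl fun t _ ↦ ?_
    rw [map_zsmul, smul_comm, Nat.cast_add, add_right_comm]
  rw [finsum_congr expand, finsum_sum_comm]
  · refine F.sum_mem fun t _ ↦ ?_
    rw [← smul_finsum' _ (W.hasFiniteSupport_D_pow_P _ _ s _), finsum_D_pow_P]
    exact zsmul_mem (F.smul_mem _ (hF _ _)) _
  · exact fun t _ ↦ (W.hasFiniteSupport_D_pow_P (n + t) _ s _).subset
      fun _ hj ↦ right_ne_zero_of_smul hj

theorem P_P_mem_of_forall_lt {F : Submodule ℂ V} {s a v : V} {d : ℕ}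
    (hF : ∀ (x : V) (n : ℕ), W.P n x s ∈ F)
    (hlt : ∀ m : ℕ, d < m → ∀ j ≤ m, ∀ k : ℤ, (W.D ^ j) (W.P k a (W.P m s v)) ∈ F) (k : ℤ) :
    W.P k a (W.P d s v) ∈ F := by
  obtain ⟨I, hI⟩ := W.field_ax s a
  obtain ⟨M, hM⟩ := W.field_ax s v
  have sum_mem : ∑ t ∈ range (I + 1),
      ((-1) ^ (I - t) * I.choose t : ℤ) • W.P (k - t) a (W.P (d + t) s v) ∈ F := by
    have P_eq_zero (j t : ℕ) (hj : j ∉ range M) : W.P (d + j + t) s v = 0 :=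
      mod_cast hM (d + j + t) (by rw [mem_range] at hj; lia)
    have zeroth_term_mem := mem_of_finsum_mem (i := 0)
      ((finite_toSet (range M)).subset (Function.support_subset_iff'.2 fun j hj ↦ by
        simp only [P_eq_zero j _ hj, map_zero, smul_zero, sum_const_zero]))
      (W.finsum_D_pow_sum_P_P_mem hF hI d k v) fun j hj ↦ by
        rw [map_sum]
        refine F.smul_mem _ (F.sum_mem fun t _ ↦ ?_)
        rw [map_zsmul]
        exact zsmul_mem (mod_cast hlt (d + j + t) (by lia) j (by lia) (k - t)) _
    simpa using zeroth_term_mem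
  rw [sum_range_succ', F.add_mem_iff_right] at sum_mem
  · rcases neg_one_pow_eq_or ℤ I with hI | hI <;> simpa [hI] using sum_mem
  · refine F.sum_mem fun t _ ↦ zsmul_mem ?_ _
    exact mod_cast hlt (d + (t + 1)) (by lia) 0 (Nat.zero_le _) (k - (t + 1 : ℕ))

end Locality

section FiniteCoefficients

/-- The span of the coefficients of the formal distribution `Y(a, z) v`; if it is
finite-dimensional, then `(b_(j) a)_(k) v = 0` for all `b`, `j ≥ 0` and `k`. -/
def coeffSpan (a v : V) : Submodule ℂ V :=
  span ℂ (Set.range fun k : ℤ ↦ W.P k a v)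

theorem coeffSpan_le {a v : V} {F : Submodule ℂ V} :
    W.coeffSpan a v ≤ F ↔ ∀ k : ℤ, W.P k a v ∈ F := by
  simp [coeffSpan, span_le, Set.range_subset_iff]

theorem P_mem_coeffSpan (a v : V) (k : ℤ) : W.P k a v ∈ W.coeffSpan a v :=
  W.coeffSpan_le.1 le_rfl k

theorem P_D_pow_mem {F : Submodule ℂ V} {x s : V} (hx : ∀ n : ℕ, W.P n x s ∈ F) (k n : ℕ) :
    W.P n ((W.D ^ k) x) s ∈ F := by
  induction k generalizing n with
  | zero => exact hx n
  | succ k ih =>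
    rw [pow_succ', Module.End.mul_apply, W.transl_inv]
    cases n with
    | zero => simp
    | succ n => simpa using F.smul_mem (-(n + 1 : ℂ)) (ih n)

theorem IsFinite.exists_finiteDimensional_forall_P_mem {W : VertexAlgebra V} (hfin : W.IsFinite)
    (s : V) :
    ∃ F : Submodule ℂ V, FiniteDimensional ℂ F ∧ ∀ (x : V) (n : ℕ), W.P n x s ∈ F := by
  obtain ⟨G, hG⟩ := hfin
  choose N hN using fun g ↦ W.field_ax g s
  let products : Set V := ⋃ g ∈ G, (fun n : ℕ ↦ W.P n g s) '' Set.Iio (N g)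
  have products_finite : products.Finite :=
    G.finite_toSet.biUnion fun g _ ↦ (Set.finite_Iio (N g)).image _
  refine ⟨span ℂ products, FiniteDimensional.span_of_finite ℂ products_finite, fun x n ↦ ?_⟩
  have generator_mem (g : V) (hg : g ∈ G) (n : ℕ) : W.P n g s ∈ span ℂ products := by
    rcases lt_or_ge n (N g) with hn | hn
    · exact subset_span (Set.mem_biUnion hg ⟨n, hn, rfl⟩)
    · rw [hN g n hn]
      exact zero_mem _
  have span_le_comap : span ℂ {x | ∃ g ∈ G, ∃ k : ℕ, x = (W.D ^ k) g}
      ≤ (span ℂ products).comap ((W.P n).flip s) := by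
    rw [span_le]
    rintro _ ⟨g, hg, k, rfl⟩
    exact W.P_D_pow_mem (generator_mem g hg) k n
  exact span_le_comap (hG x)

theorem IsFinite.finiteDimensional_coeffSpan_of_forall_lt {W : VertexAlgebra V}
    (hfin : W.IsFinite) {s a v : V} {d : ℕ}
    (hlt : ∀ m : ℕ, d < m → FiniteDimensional ℂ (W.coeffSpan a (W.P m s v))) :
    FiniteDimensional ℂ (W.coeffSpan a (W.P d s v)) := by
  obtain ⟨F, hFdim, hF⟩ := hfin.exists_finiteDimensional_forall_P_mem s
  obtain ⟨M, hM⟩ := W.field_ax s v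
  have hltM (m : Set.Ioo d M) := hlt m m.2.1
  let higher : Submodule ℂ V :=
    ⨆ m : Set.Ioo d M, ⨆ j : Fin M, (W.coeffSpan a (W.P m s v)).map (W.D ^ (j : ℕ))
  refine finiteDimensional_of_le (S₂ := F ⊔ higher) (W.coeffSpan_le.2
    (W.P_P_mem_of_forall_lt (fun x n ↦ mem_sup_left (hF x n)) fun m hm j hj k ↦ ?_))
  rcases lt_or_ge m M with hmM | hMm
  · exact mem_sup_right (mem_iSup_of_mem ⟨m, hm, hmM⟩ (mem_iSup_of_mem ⟨j, hj.trans_lt hmM⟩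
      (mem_map_of_mem (W.P_mem_coeffSpan a _ k))))
  · simp [hM m hMm]

theorem IsFinite.finiteDimensional_coeffSpan {W : VertexAlgebra V} (hfin : W.IsFinite)
    (s a v : V) (d : ℕ) : FiniteDimensional ℂ (W.coeffSpan a (W.P d s v)) := by
  obtain ⟨M, hM⟩ := W.field_ax s v
  suffices descend : ∀ e d : ℕ, M ≤ d + e → FiniteDimensional ℂ (W.coeffSpan a (W.P d s v)) from
    descend M d (Nat.le_add_left M d)
  intro e
  induction e with
  | zero =>
    intro d hd
    have coeffSpan_le_bot : W.coeffSpan a (W.P d s v) ≤ ⊥ :=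
      W.coeffSpan_le.2 fun k ↦ by simp [hM d hd]
    exact finiteDimensional_of_le coeffSpan_le_bot
  | succ e ih =>
    exact fun d hd ↦ hfin.finiteDimensional_coeffSpan_of_forall_lt fun m hm ↦ ih m (by lia)

theorem exists_forall_P_eq_zero (b : V) (F : Submodule ℂ V) [FiniteDimensional ℂ F] :
    ∃ N : ℕ, ∀ m : ℕ, N ≤ m → ∀ x ∈ F, W.P m b x = 0 := by
  obtain ⟨B, rfl⟩ := fg_iff_finiteDimensional F |>.2 inferInstance
  choose N hN using W.field_ax b
  refine ⟨B.sup N, fun m hm x hx ↦ ?_⟩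
  have span_le_ker : span ℂ (B : Set V) ≤ (W.P m b).ker :=
    span_le.2 fun y hy ↦ hN y m ((le_sup (f := N) hy).trans hm)
  exact span_le_ker hx

theorem P_P_eq_zero_of_finiteDimensional (b : V) {a u : V}
    [FiniteDimensional ℂ (W.coeffSpan a u)] (j : ℕ) (k : ℤ) : W.P k (W.P j b a) u = 0 := by
  obtain ⟨I, hI⟩ := W.field_ax b a
  obtain ⟨M, hM⟩ := W.field_ax b u
  obtain ⟨N, hN⟩ := W.exists_forall_P_eq_zero b (W.coeffSpan a u)
  rcases le_or_gt I j with hj | hj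
  · rw [hI j hj, map_zero, LinearMap.zero_apply]
  have coeff_eq_zero := eq_zero_of_sum_ringChoose_smul_eq_zero (N := max M N)
    (y := fun i ↦ W.P (k + j - i) (W.P i b a) u) (fun m hm ↦ ?_) hj
  · simpa using coeff_eq_zero
  lift m to ℕ using by lia
  have commutator := W.P_commutator hI m (k + j - m) u
  rw [hN m (by lia) _ (W.P_mem_coeffSpan a u _), hM m (by lia), map_zero, sub_zero,
    add_sub_cancel] at commutator
  exact commutator.symm

theorem P_mem_posSpan_top (a b : V) (j : ℕ) : W.P j a b ∈ W.posSpan ⊤ ⊤ :=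
  subset_span ⟨a, mem_top, b, mem_top, j, rfl⟩

theorem IsFinite.P_eq_zero_of_mem_posSpan {W : VertexAlgebra V} (hfin : W.IsFinite) {x y : V}
    (hx : x ∈ W.posSpan ⊤ ⊤) (hy : y ∈ W.posSpan ⊤ ⊤) (k : ℤ) : W.P k x y = 0 := by
  induction hx, hy using span_induction₂ with
  | mem_mem x y hx hy =>
    obtain ⟨b, -, a, -, j, rfl⟩ := hx
    obtain ⟨s, -, v, -, d, rfl⟩ := hy
    have := hfin.finiteDimensional_coeffSpan s a v d
    exact W.P_P_eq_zero_of_finiteDimensional b j k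
  | zero_left => simp
  | zero_right => simp
  | add_left _ _ _ _ _ _ h₁ h₂ => simp [h₁, h₂]
  | add_right _ _ _ _ _ _ h₁ h₂ => simp [h₁, h₂]
  | smul_left _ _ _ _ _ h => simp [h]
  | smul_right _ _ _ _ _ h => simp [h]

theorem IsFinite.P_P_comm_of_mem_posSpan {W : VertexAlgebra V} (hfin : W.IsFinite) {v : V}
    (hv : v ∈ W.posSpan ⊤ ⊤) (s a : V) (m : ℕ) (k : ℤ) :
    W.P m s (W.P k a v) = W.P k a (W.P m s v) := by
  obtain ⟨I, hI⟩ := W.field_ax s a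
  rw [← sub_eq_zero, W.P_commutator hI]
  refine sum_eq_zero fun i _ ↦ ?_
  rw [hfin.P_eq_zero_of_mem_posSpan (W.P_mem_posSpan_top s a i) hv, smul_zero]

end FiniteCoefficients

section WeightSpaces

variable (S : Submodule ℂ V) (ψ : V → ℕ → ℂ)

/-- The layer `V^ψ_i` of the generalized weight space: `genWtSeq` as a subspace. -/
def genWtLayer : ℕ → Submodule ℂ V
  | 0 => ⊥
  | i + 1 => ⨅ s ∈ S, ⨅ h : ℕ, (genWtLayer i).comap (W.P h s - ψ s h • LinearMap.id)

/-- The generalized weight space `V^ψ`: `genWt` as a subspace. -/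
def genWtSpace : Submodule ℂ V :=
  ⨆ i, W.genWtLayer S ψ i

variable {S ψ}

theorem mem_genWtLayer_succ {i : ℕ} {v : V} : v ∈ W.genWtLayer S ψ (i + 1) ↔
    ∀ s ∈ S, ∀ h : ℕ, W.P h s v - ψ s h • v ∈ W.genWtLayer S ψ i := by
  simp [genWtLayer]

theorem coe_genWtLayer (i : ℕ) : (W.genWtLayer S ψ i : Set V) = W.genWtSeq S ψ i := by
  induction i with
  | zero => rfl
  | succ i ih =>
    ext v
    simp only [SetLike.mem_coe, mem_genWtLayer_succ, genWtSeq, Set.mem_ofPred_eq, ← ih]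

theorem genWtLayer_mono : Monotone (W.genWtLayer S ψ) := by
  refine monotone_nat_of_le_succ fun i ↦ ?_
  induction i with
  | zero => exact bot_le
  | succ i ih =>
    intro v hv
    rw [mem_genWtLayer_succ] at hv ⊢
    exact fun s hs h ↦ ih (hv s hs h)

theorem mem_genWtSpace {v : V} : v ∈ W.genWtSpace S ψ ↔ ∃ i, v ∈ W.genWtLayer S ψ i :=
  mem_iSup_of_directed _ W.genWtLayer_mono.directed_le

theorem coe_genWtSpace : (W.genWtSpace S ψ : Set V) = W.genWt S ψ := by
  ext v
  simp only [SetLike.mem_coe, mem_genWtSpace, genWt, Set.mem_ofPred_eq, ← coe_genWtLayer]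

theorem P_mem_genWtLayer_of_mem {s : V} (hs : s ∈ S) (h : ℕ) {i : ℕ} {v : V}
    (hv : v ∈ W.genWtLayer S ψ i) : W.P h s v ∈ W.genWtLayer S ψ i := by
  have remainder_mem := W.mem_genWtLayer_succ.1 (W.genWtLayer_mono i.le_succ hv) s hs h
  exact (sub_mem_iff_left _ (smul_mem _ _ hv)).1 remainder_mem

theorem P_natCast_D (h : ℕ) (s v : V) :
    W.P h s (W.D v) = W.D (W.P h s v) + h • W.P (h - 1 : ℕ) s v := by
  rw [W.D_deriv, W.transl_inv]
  cases h with
  | zero => simp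
  | succ h =>
    rw [Nat.cast_succ, add_sub_cancel_right, ← Nat.cast_smul_eq_nsmul ℂ, add_tsub_cancel_right]
    push_cast
    module

theorem D_mem_genWtLayer_succ {i : ℕ} {v : V} (hv : v ∈ W.genWtLayer S ψ i) :
    W.D v ∈ W.genWtLayer S ψ (i + 1) := by
  induction i generalizing v with
  | zero =>
    rw [(mem_bot ℂ).1 hv, map_zero]
    exact zero_mem _
  | succ i ih =>
    refine W.mem_genWtLayer_succ.2 fun s hs h ↦ ?_
    rw [P_natCast_D, add_sub_right_comm, ← map_smul, ← map_sub]
    exact add_mem (ih (W.mem_genWtLayer_succ.1 hv s hs h))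
      (nsmul_mem (W.P_mem_genWtLayer_of_mem hs (h - 1) hv) h)

theorem genWtLayer_le_posSpan {s : V} (hs : s ∈ S) {h : ℕ} (hψ : ψ s h ≠ 0) (i : ℕ) :
    W.genWtLayer S ψ i ≤ W.posSpan ⊤ ⊤ := by
  induction i with
  | zero => exact bot_le
  | succ i ih =>
    intro v hv
    have remainder_mem := ih (W.mem_genWtLayer_succ.1 hv s hs h)
    rwa [sub_mem_iff_right _ (W.P_mem_posSpan_top s v h), smul_mem_iff _ hψ] at remainder_mem

theorem IsFinite.P_mem_genWtLayer {W : VertexAlgebra V} (hfin : W.IsFinite) {s : V} (hs : s ∈ S)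
    {h : ℕ} (hψ : ψ s h ≠ 0) (a : V) (k : ℤ) {i : ℕ} {v : V} (hv : v ∈ W.genWtLayer S ψ i) :
    W.P k a v ∈ W.genWtLayer S ψ i := by
  induction i generalizing v with
  | zero =>
    rw [(mem_bot ℂ).1 hv, map_zero]
    exact zero_mem _
  | succ i ih =>
    have v_mem := W.genWtLayer_le_posSpan hs hψ _ hv
    refine W.mem_genWtLayer_succ.2 fun s' hs' m ↦ ?_
    rw [hfin.P_P_comm_of_mem_posSpan v_mem, ← map_smul, ← map_sub]
    exact ih (W.mem_genWtLayer_succ.1 hv s' hs' m)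

end WeightSpaces

end VertexAlgebra

theorem nonzero_generalized_weight_space_is_abelian_ideal_general
    {V : Type*} [AddCommGroup V] [Module ℂ V] {W : VertexAlgebra V} (hfin : W.IsFinite)
    {S : Submodule ℂ V} {ψ : V → ℕ → ℂ} (hψne : ∃ s ∈ S, ∃ h : ℕ, ψ s h ≠ 0) :
    W.IsAbelianIdeal (W.genWtSpace S ψ) := by
  obtain ⟨s, hs, h, hψ⟩ := hψne
  have le_posSpan : W.genWtSpace S ψ ≤ W.posSpan ⊤ ⊤ := iSup_le (W.genWtLayer_le_posSpan hs hψ)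
  refine ⟨⟨fun x hx ↦ ?_, fun a x hx n ↦ ?_⟩,
    fun x hx y hy ↦ hfin.P_eq_zero_of_mem_posSpan (le_posSpan hx) (le_posSpan hy)⟩
  all_goals
    rw [VertexAlgebra.mem_genWtSpace] at hx ⊢
    obtain ⟨i, hi⟩ := hx
  · exact ⟨i + 1, W.D_mem_genWtLayer_succ hi⟩
  · exact ⟨i, hfin.P_mem_genWtLayer hs hψ a n hi⟩

open VertexAlgebra in
/-- in a finite vertex algebra, the generalized weight space of a non-zero
weight `ψ` for the adjoint action of a Lie conformal subalgebra `S` is an abelian vertex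
ideal: it is a `ℂ[T]`-submodule stable under all products with `V`, on which all products
vanish. -/
theorem nonzero_generalized_weight_space_is_abelian_ideal
    {V : Type*} [AddCommGroup V] [Module ℂ V]
    (W : VertexAlgebra V) (hfin : W.IsFinite)
    (S : Submodule ℂ V) (hS : W.IsConfSubalgebra S)
    (ψ : V → ℕ → ℂ) (hψ : W.IsWeight S ψ)
    (hψne : ∃ s ∈ S, ∃ h : ℕ, ψ s h ≠ 0) :
    (∀ x ∈ W.genWt S ψ, ∀ y ∈ W.genWt S ψ, x + y ∈ W.genWt S ψ) ∧
    (∀ c : ℂ, ∀ x ∈ W.genWt S ψ, c • x ∈ W.genWt S ψ) ∧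
    (∀ x ∈ W.genWt S ψ, W.D x ∈ W.genWt S ψ) ∧
    (∀ a : V, ∀ x ∈ W.genWt S ψ, ∀ n : ℤ, W.P n a x ∈ W.genWt S ψ) ∧
    (∀ x ∈ W.genWt S ψ, ∀ y ∈ W.genWt S ψ, ∀ n : ℤ, W.P n x y = 0) := by
  have ideal := nonzero_generalized_weight_space_is_abelian_ideal_general (W := W) hfin hψne
  simp only [← W.coe_genWtSpace]
  exact ⟨fun _ hx _ hy ↦ add_mem hx hy, fun c _ hx ↦ Submodule.smul_mem _ c hx,
    ideal.1.1, ideal.1.2, ideal.2⟩
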